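/- The cohomology of the cochain complex of abelian groups Hom_{ℤ[D_{2p}]}(C(j)_*, ℤ) satisfies: H^n ≅ A_n ⊕ P′_n ⊕ Q′_n, where A_n = ℤ if n = 0 and 0 otherwise; P′_n = ℤ/p if 0 < n < 2m−1 and n ≡ 0 (mod 4), and 0 otherwise; and Q′_n = ℤ if n = 2m−1 and m is even, Q′_n = ℤ/2 if m+2 ≤ n ≤ 2m−1 and n ≡ m (mod 2), and Q′_n = 0 otherwise. (This is the value at the orbit D_{2p}/D_{2p} of the Bredon cohomology H^*_{D_{2p}}(S(mγ); constant ℤ) = ℤ ⊕ ⁰A^m ⊕ B^m[m−1].) -/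

import Mathlib

open DihedralGroup Finsupp

noncomputable section

namespace DihedralCell

variable (p : ℕ)

/-- ζ, the rotation of order `p`. -/
def zeta : DihedralGroup p := .r 1

/-- τ, the reflection. -/
def tau : DihedralGroup p := .sr 0

/-- The order-2 subgroup ⟨τ⟩. -/
def Htau : Subgroup (DihedralGroup p) := Subgroup.zpowers (tau p)

/-- Left cosets of ⟨τ⟩. -/
abbrev Cos := DihedralGroup p ⧸ Htau p

/-- Cell names of the dihedral cellular structure on `S(mγ_j)`: `a0 k q`/`b0 k q` are the
cells `q·a_{k,0}`, `q·b_{k,0}` (indexed by cosets of ⟨τ⟩); `a k l g`, `b k l g` (`1 ≤ l ≤ k-1`)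
are the free cells `g·a_{k,l}`, `g·b_{k,l}`; `c k g` is `g·c_k`. -/
inductive CIdx : Type
  | a0 (k : ℕ) (q : Cos p)
  | b0 (k : ℕ) (q : Cos p)
  | a (k l : ℕ) (g : DihedralGroup p)
  | b (k l : ℕ) (g : DihedralGroup p)
  | c (k : ℕ) (g : DihedralGroup p)

variable {p}

/-- The dimension of a cell. -/
def degC : CIdx p → ℕ
  | .a0 k _ => k - 1
  | .b0 k _ => k - 1
  | .a k l _ => k + l - 1
  | .b k l _ => k + l - 1
  | .c k _ => 2 * k - 1

/-- Validity of a cell index (the junk-free cells), for the sphere `S(mγ)`. -/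
def validC (m : ℕ) : CIdx p → Prop
  | .a0 k _ => 1 ≤ k ∧ k ≤ m
  | .b0 k _ => 1 ≤ k ∧ k ≤ m
  | .a k l _ => 1 ≤ l ∧ l ≤ k - 1 ∧ k ≤ m
  | .b k l _ => 1 ≤ l ∧ l ≤ k - 1 ∧ k ≤ m
  | .c k _ => 1 ≤ k ∧ k ≤ m

/-- The action of the dihedral group on cells. -/
def actC (g' : DihedralGroup p) : CIdx p → CIdx p
  | .a0 k q => .a0 k (g' • q)
  | .b0 k q => .b0 k (g' • q)
  | .a k l g => .a k l (g' * g)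
  | .b k l g => .b k l (g' * g)
  | .c k g => .c k (g' * g)

variable (p)

/-- The total module of cellular chains (all degrees together). -/
abbrev ChC := CIdx p →₀ ℤ

/-- The `ℤ`-linear action of `D_{2p}` on chains. -/
def rhoC (g : DihedralGroup p) : ChC p →ₗ[ℤ] ChC p :=
  Finsupp.lmapDomain ℤ ℤ (actC g)

/-- The submodule of chains of degree `n` (the degree-`n` term of the complex `C(j)`). -/
def Csub (m n : ℕ) : Submodule ℤ (ChC p) :=
  Finsupp.supported ℤ ℤ {i | validC m i ∧ degC i = n}

/-- The boundary of a single cell, following Lemma 2.2 of the paper (for the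
representation `γ_j`, i.e. with `ζ_i = ζ^j`). -/
def bndC (j : ℕ) : CIdx p → ChC p
  | .a0 k q => if k ≤ 1 then 0 else single (.a0 (k-1) q) 1 - single (.b0 (k-1) q) 1
  | .b0 k q => if k ≤ 1 then 0 else single (.a0 (k-1) q) 1 - single (.b0 (k-1) q) 1
  | .c k g =>
      if k ≤ 1 then
        (single (.b0 1 (↑(g * zeta p ^ (j * ((p+1)/2))))) 1 : ChC p) - single (.a0 1 ↑g) 1
      else
        single (.a k (k-1) g) (-1) + single (.a k (k-1) (g * tau p)) ((-1)^k)
        + single (.b k (k-1) (g * zeta p ^ (j * ((p+1)/2)))) 1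
        + single (.b k (k-1) (g * zeta p ^ (j * ((p+1)/2)) * tau p)) ((-1)^(k-1))
  | .a k l g =>
      if l = 0 then 0
      else if l = k - 1 then
        (if k = 2 then (single (.a0 k (↑g : Cos p)) (-1) : ChC p)
         else single (.a k (k-2) g) (-1) + single (.a k (k-2) (g * tau p)) ((-1)^(k-1)))
        + single (.c (k-1) g) (-1)
        - ∑ t ∈ Finset.range ((p-1)/2), single (.c (k-1) (g * zeta p ^ (j * (t+1)))) 1
        + ∑ t ∈ Finset.range ((p-1)/2),
            single (.c (k-1) (g * zeta p ^ (j * (t+1)) * tau p)) ((-1)^(k-2))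
      else if l = 1 then
        single (.a (k-1) 1 g) 1 - single (.b (k-1) 1 g) 1 + single (.a0 k (↑g : Cos p)) ((-1)^(k-1))
      else
        single (.a (k-1) l g) 1 - single (.b (k-1) l g) 1
        + single (.a k (l-1) g) ((-1)^(k-l)) + single (.a k (l-1) (g * tau p)) ((-1)^(k-1))
  | .b k l g =>
      if l = 0 then 0
      else if l = k - 1 then
        (if k = 2 then (single (.b0 k (↑g : Cos p)) (-1) : ChC p)
         else single (.b k (k-2) g) (-1) + single (.b k (k-2) (g * tau p)) ((-1)^(k-1)))
        + single (.c (k-1) g) (-1)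
        - ∑ t ∈ Finset.range ((p-1)/2), single (.c (k-1) (g * zeta p ^ (j * (t+1)))) 1
        + ∑ t ∈ Finset.range ((p-1)/2),
            single (.c (k-1) (g * zeta p ^ (j * (t+1)) * tau p)) ((-1)^(k-2))
      else if l = 1 then
        single (.a (k-1) 1 g) 1 - single (.b (k-1) 1 g) 1 + single (.b0 k (↑g : Cos p)) ((-1)^(k-1))
      else
        single (.a (k-1) l g) 1 - single (.b (k-1) l g) 1
        + single (.b k (l-1) g) ((-1)^(k-l)) + single (.b k (l-1) (g * tau p)) ((-1)^(k-1))

/-- The differential of the dihedral cellular complex `C(j)`. -/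
def DC (j : ℕ) : ChC p →ₗ[ℤ] ChC p :=
  Finsupp.lift (ChC p) ℤ (CIdx p) (bndC p j)

/-- The submodule of `D_{2p}`-invariant chains of degree `n`. -/
def InvC (m n : ℕ) : Submodule ℤ (ChC p) :=
  Csub p m n ⊓ (⨅ g : DihedralGroup p, LinearMap.ker (rhoC p g - LinearMap.id))

/-- Cycles of degree `n` of the underlying complex of abelian groups. -/
def ZcC (m j n : ℕ) : Submodule ℤ (ChC p) := Csub p m n ⊓ LinearMap.ker (DC p j)

/-- Degree-`n` homology of the underlying complex of abelian groups of `C(j)`. -/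
def HcC (m j n : ℕ) : Type :=
  ↥(ZcC p m j n) ⧸ Submodule.comap (ZcC p m j n).subtype
    (Submodule.map (DC p j) (Csub p m (n+1)))

instance (m j n : ℕ) : AddCommGroup (HcC p m j n) :=
  inferInstanceAs (AddCommGroup (↥(ZcC p m j n) ⧸ Submodule.comap (ZcC p m j n).subtype
    (Submodule.map (DC p j) (Csub p m (n+1)))))

instance (m j n : ℕ) : Module ℤ (HcC p m j n) :=
  inferInstanceAs (Module ℤ (↥(ZcC p m j n) ⧸ Submodule.comap (ZcC p m j n).subtype
    (Submodule.map (DC p j) (Csub p m (n+1)))))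

/-- Cycles of degree `n` of the complex of `D_{2p}`-invariants `(C(j))^{D_{2p}}`. -/
def ZinvC (m j n : ℕ) : Submodule ℤ (ChC p) := InvC p m n ⊓ LinearMap.ker (DC p j)

/-- Degree-`n` homology of the complex of `D_{2p}`-invariants of `C(j)`. -/
def HinvC (m j n : ℕ) : Type :=
  ↥(ZinvC p m j n) ⧸ Submodule.comap (ZinvC p m j n).subtype
    (Submodule.map (DC p j) (InvC p m (n+1)))

instance (m j n : ℕ) : AddCommGroup (HinvC p m j n) :=
  inferInstanceAs (AddCommGroup (↥(ZinvC p m j n) ⧸ Submodule.comap (ZinvC p m j n).subtype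
    (Submodule.map (DC p j) (InvC p m (n+1)))))

instance (m j n : ℕ) : Module ℤ (HinvC p m j n) :=
  inferInstanceAs (Module ℤ (↥(ZinvC p m j n) ⧸ Submodule.comap (ZinvC p m j n).subtype
    (Submodule.map (DC p j) (InvC p m (n+1)))))

/-- The dual module: `ℤ`-linear functionals on chains. -/
abbrev DualC := ChC p →ₗ[ℤ] ℤ

/-- Degree-`n` cochains of `Hom_{ℤ[D_{2p}]}(C(j), ℤ)`: `D_{2p}`-equivariant functionals
(`ℤ` with the trivial action) supported on the degree-`n` cells. -/
def KcoC (m n : ℕ) : Submodule ℤ (DualC p) :=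
  (⨅ i : {i : CIdx p // ¬(validC m i ∧ degC i = n)},
      LinearMap.ker (LinearMap.applyₗ (single i.1 1)))
  ⊓ (⨅ g : DihedralGroup p, LinearMap.ker (LinearMap.lcomp ℤ ℤ (rhoC p g) - LinearMap.id))

open Classical in
/-- Projection of the total chain module onto its degree-`n` summand. -/
def projC (m n : ℕ) : ChC p →ₗ[ℤ] ChC p :=
  Finsupp.lift (ChC p) ℤ (CIdx p)
    (fun i => if validC m i ∧ degC i = n then single i 1 else 0)

/-- The coboundary taking a degree-`n` cochain `f` to the degree-`(n+1)` cochain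
`f ∘ d` (precomposition with the differential out of degree `n+1`). -/
def cobdC (m j n : ℕ) : DualC p →ₗ[ℤ] DualC p :=
  LinearMap.lcomp ℤ ℤ ((DC p j).comp (projC p m (n+1)))

/-- Degree-`n` cocycles of `Hom_{ℤ[D_{2p}]}(C(j), ℤ)`. -/
def ZcoC (m j n : ℕ) : Submodule ℤ (DualC p) := KcoC p m n ⊓ LinearMap.ker (cobdC p m j n)

/-- Degree-`n` cohomology of the cochain complex `Hom_{ℤ[D_{2p}]}(C(j), ℤ)`. -/
def HcoC (m j n : ℕ) : Type :=
  ↥(ZcoC p m j n) ⧸ Submodule.comap (ZcoC p m j n).subtype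
    (Submodule.map (cobdC p m j (n-1)) (KcoC p m (n-1)))

instance (m j n : ℕ) : AddCommGroup (HcoC p m j n) :=
  inferInstanceAs (AddCommGroup (↥(ZcoC p m j n) ⧸ Submodule.comap (ZcoC p m j n).subtype
    (Submodule.map (cobdC p m j (n-1)) (KcoC p m (n-1)))))

instance (m j n : ℕ) : Module ℤ (HcoC p m j n) :=
  inferInstanceAs (Module ℤ (↥(ZcoC p m j n) ⧸ Submodule.comap (ZcoC p m j n).subtype
    (Submodule.map (cobdC p m j (n-1)) (KcoC p m (n-1)))))


end DihedralCell

end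

/-
Write `A(k,l) = f(a_{k,l})`, `D(k,l) = f(a_{k,l}) - f(b_{k,l})` for `l < k` and `D(k,k) = -f(c_k)`.
An equivariant cochain `f` is determined by these coordinates, in which the coboundary reads
`A'(k,l) = w(k,l) D(k-1,l) + e(k,l) A(k,l-1)` and `D'(k,l) = e(k,l) D(k,l-1)`, where `w(k,l)` is `p`
if `l + 1 = k` is odd and `1` otherwise, and, up to sign, `e(k,l)` is `0` for even `l`, `1` for
`l = 1` and `2` for the other odd `l`. Hence the column `D(k-1,·)` cancels against `A(k,·)` up to
the factors `w`: this leaves `A(1,0)`, which gives the `ℤ` in degree `0`, a group `ℤ/p` at each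
`A(k,k-1)` with `k > 1` odd, in degree `2k-2`, and the column `D(m,·)` with differential `e(m,·)`,
which gives the groups `ℤ/2` and, for even `m`, the `ℤ` in degree `2m-1`.
-/

noncomputable section

namespace DihedralCell

variable {p m j n : ℕ} {f g : DualC p}

/-- The two families of cells `a_{k,l}` and `b_{k,l}`, on which the differential has the same
shape. -/
inductive Side : Type
  | a
  | b

/-- The cell `g·a_{k,l}` or `g·b_{k,l}`, which for `l = 0` depends on the coset of `g` only. -/
def cell : Side → ℕ → ℕ → DihedralGroup p → CIdx p
  | .a, k, 0, g => .a0 k g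
  | .b, k, 0, g => .b0 k g
  | .a, k, l + 1, g => .a k (l + 1) g
  | .b, k, l + 1, g => .b k (l + 1) g

/-- The generator `a_{k,l}` or `b_{k,l}` of the complex. -/
def cellChain (s : Side) (k l : ℕ) : ChC p :=
  single (cell s k l 1) 1

/-- The chain `a_{k,l} - b_{k,l}` for `l < k`, extended to `l = k` by `-c_k`, for which the
formulas for the coboundary are the same. -/
def diffChain (k l : ℕ) : ChC p :=
  if l = k then -single (.c k 1) 1 else cellChain .a k l - cellChain .b k l

/-- The coefficient `w(k,l)` of `D(k-1,l)` in the coboundary at `a_{k,l}`. -/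
def horizCoeff (p k l : ℕ) : ℤ :=
  if l + 1 = k ∧ Odd k then p else 1

/-- The coefficient `e(k,l)` by which the coboundary maps the coordinates at `(k,l-1)` to those at
`(k,l)`. -/
def vertCoeff (k l : ℕ) : ℤ :=
  if Even l then 0 else if l = 1 then (-1) ^ (k + 1) else 2 * (-1) ^ (k + 1)

lemma horizCoeff_of_lt {k l : ℕ} (h : l + 1 < k) : horizCoeff p k l = 1 :=
  if_neg fun h' => h.ne h'.1

lemma horizCoeff_ne_zero (hp : p ≠ 0) (k l : ℕ) : horizCoeff p k l ≠ 0 := by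
  unfold horizCoeff
  split_ifs <;> simp [hp]

lemma vertCoeff_of_even (k : ℕ) {l : ℕ} (hl : Even l) : vertCoeff k l = 0 :=
  if_pos hl

lemma isUnit_vertCoeff_one (k : ℕ) : IsUnit (vertCoeff k 1) := by
  simp [vertCoeff]

lemma associated_vertCoeff_two (k : ℕ) {l : ℕ} (hl : Odd l) (hl1 : l ≠ 1) :
    Associated (vertCoeff k l) 2 := by
  rw [vertCoeff, if_neg (Nat.not_even_iff_odd.2 hl), if_neg hl1]
  exact associated_mul_unit_left 2 _ (isUnit_neg_one.pow _)

lemma vertCoeff_ne_zero (k : ℕ) {l : ℕ} (hl : Odd l) : vertCoeff k l ≠ 0 := by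
  rw [vertCoeff, if_neg (Nat.not_even_iff_odd.2 hl)]
  split_ifs <;> simp

lemma vertCoeff_succ_left (k l : ℕ) : vertCoeff (k + 1) l = -vertCoeff k l := by
  simp only [vertCoeff]
  split_ifs <;> ring

lemma horizCoeff_eq_one_or_vertCoeff_eq_zero (p k k' l : ℕ) :
    horizCoeff p k l = 1 ∨ vertCoeff k' l = 0 := by
  by_cases h : l + 1 = k ∧ Odd k
  · exact .inr (vertCoeff_of_even k' (by grind))
  · exact .inl (if_neg h)

section Cells

lemma actC_cell (s : Side) (k l : ℕ) (g x : DihedralGroup p) :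
    actC g (cell s k l x) = cell s k l (g * x) := by
  rcases s, l with ⟨_ | _, _ | _⟩ <;> rfl

lemma validC_cell_and_degC_eq_iff (s : Side) (k l : ℕ) (g : DihedralGroup p) :
    validC m (cell s k l g) ∧ degC (cell s k l g) = n ↔ l < k ∧ k ≤ m ∧ k + l = n + 1 := by
  rcases s, l with ⟨_ | _, _ | _⟩ <;> simp only [cell, validC, degC] <;> omega

lemma validC_c_and_degC_eq_iff (k : ℕ) (g : DihedralGroup p) :
    validC m (CIdx.c k g) ∧ degC (CIdx.c k g) = n ↔ k ≤ m ∧ k + k = n + 1 := by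
  simp only [validC, degC]
  omega

lemma exists_eq_cell_or_eq_c {i : CIdx p} (hi : validC m i) :
    (∃ s k l g, i = cell s k l g) ∨ ∃ k g, i = .c k g := by
  rcases i with ⟨k, ⟨x⟩⟩ | ⟨k, ⟨x⟩⟩ | ⟨k, _ | l, x⟩ | ⟨k, _ | l, x⟩ | ⟨k, x⟩
  · exact .inl ⟨.a, k, 0, x, rfl⟩
  · exact .inl ⟨.b, k, 0, x, rfl⟩
  · exact absurd hi.1 (by omega)
  · exact .inl ⟨.a, k, l + 1, x, rfl⟩
  · exact absurd hi.1 (by omega)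
  · exact .inl ⟨.b, k, l + 1, x, rfl⟩
  · exact .inr ⟨k, x, rfl⟩

end Cells

section Boundary

/-- The part of the boundary of a cell `g·a_{k,l}` or `g·b_{k,l}` that lies in the column of index
`k - 1`; for `l + 1 = k` it is `g(-(1 + σ) + (-1)^k στ)c_{k-1}`. -/
def horizBnd (j k l : ℕ) (g : DihedralGroup p) : ChC p :=
  if l + 1 = k then
    single (.c l g) (-1)
    - ∑ t ∈ Finset.range ((p - 1) / 2), single (.c l (g * zeta p ^ (j * (t + 1)))) 1
    + ∑ t ∈ Finset.range ((p - 1) / 2),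
        single (.c l (g * zeta p ^ (j * (t + 1)) * tau p)) ((-1) ^ k)
  else single (cell .a (k - 1) l g) 1 - single (cell .b (k - 1) l g) 1

/-- The part of the boundary of a cell `g·a_{k,l}` or `g·b_{k,l}` that lies in the column of index
`k`. -/
def vertBnd (s : Side) (k : ℕ) : ℕ → DihedralGroup p → ChC p
  | 0, _ => 0
  | 1, g => single (cell s k 0 g) ((-1) ^ (k - 1))
  | l + 2, g => single (cell s k (l + 1) g) ((-1) ^ (k - (l + 2)))
      + single (cell s k (l + 1) (g * tau p)) ((-1) ^ (k - 1))

lemma bndC_cell (s : Side) {k l : ℕ} (hk : 2 ≤ k) (hl : l < k) (g : DihedralGroup p) :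
    bndC p j (cell s k l g) = horizBnd j k l g + vertBnd s k l g := by
  obtain _ | l := l
  · obtain ⟨k, rfl⟩ := Nat.exists_eq_add_of_le' hk
    cases s <;> simp [cell, bndC, horizBnd, vertBnd]
  rcases (Nat.succ_le_of_lt hl).eq_or_lt with rfl | hl
  · rw [add_comm (horizBnd ..)]
    cases s <;> cases l <;> simp [cell, bndC, horizBnd, vertBnd, pow_add, sub_eq_add_neg, add_assoc]
  · have h1 : l + 1 ≠ k - 1 := by omega
    cases s <;> cases l <;> simp [cell, bndC, horizBnd, vertBnd, hl.ne, h1, add_assoc]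

lemma bndC_c {k : ℕ} (g : DihedralGroup p) (hk : 1 ≤ k) :
    bndC p j (.c k g) = if k = 1 then
      single (cell .b 1 0 (g * zeta p ^ (j * ((p + 1) / 2)))) 1 - single (cell .a 1 0 g) 1
    else single (cell .a k (k - 1) g) (-1) + single (cell .a k (k - 1) (g * tau p)) ((-1) ^ k)
      + single (cell .b k (k - 1) (g * zeta p ^ (j * ((p + 1) / 2)))) 1
      + single (cell .b k (k - 1) (g * zeta p ^ (j * ((p + 1) / 2)) * tau p)) ((-1) ^ (k - 1)) := by
  obtain _ | _ | k := k
  · contradiction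
  · rfl
  · rfl

lemma rhoC_single (g : DihedralGroup p) (i : CIdx p) (z : ℤ) :
    rhoC p g (single i z) = single (actC g i) z :=
  mapDomain_single

lemma bndC_actC (g : DihedralGroup p) (i : CIdx p) :
    bndC p j (actC g i) = rhoC p g (bndC p j i) := by
  have hcos (x : DihedralGroup p) : g • (x : Cos p) = ↑(g * x) := rfl
  rcases i with ⟨k, q⟩ | ⟨k, q⟩ | ⟨k, l, x⟩ | ⟨k, l, x⟩ | ⟨k, x⟩
  case a0 | b0 =>
    induction q using QuotientGroup.induction_on
    simp only [bndC, actC, hcos, apply_ite (rhoC p g), map_sub, map_zero, rhoC_single]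
  all_goals
    simp only [bndC, actC, hcos, apply_ite (rhoC p g), map_add, map_sub, map_sum, map_zero,
      rhoC_single, mul_assoc]

end Boundary

section Cochains

lemma mem_KcoC_iff : f ∈ KcoC p m n ↔
    (∀ i, ¬(validC m i ∧ degC i = n) → f (single i 1) = 0) ∧
      ∀ g i, f (single (actC g i) 1) = f (single i 1) := by
  simp only [KcoC, Submodule.mem_inf, Submodule.mem_iInf, LinearMap.mem_ker, Subtype.forall,
    sub_eq_zero, LinearMap.sub_apply]
  refine and_congr Iff.rfl (forall_congr' fun g => ⟨fun h i => ?_, fun h => ?_⟩)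
  · simpa [rhoC_single] using LinearMap.congr_fun h (single i 1)
  · ext i
    simpa [rhoC_single] using h i

lemma apply_rhoC (hf : f ∈ KcoC p m n) (g : DihedralGroup p) (x : ChC p) :
    f (rhoC p g x) = f x := by
  refine LinearMap.congr_fun (f := f ∘ₗ rhoC p g) ?_ x
  ext i
  simpa [rhoC] using (mem_KcoC_iff.1 hf).2 g i

lemma apply_single_eq_mul (f : DualC p) (i : CIdx p) (z : ℤ) :
    f (single i z) = z * f (single i 1) := by
  rw [← smul_eq_mul, ← map_smul, smul_single_one]

lemma apply_single_cell (hf : f ∈ KcoC p m n) (s : Side) (k l : ℕ) (g : DihedralGroup p) (z : ℤ) :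
    f (single (cell s k l g) z) = z * f (cellChain s k l) := by
  rw [apply_single_eq_mul, cellChain, ← (mem_KcoC_iff.1 hf).2 g (cell s k l 1), actC_cell, mul_one]

lemma apply_single_c (hf : f ∈ KcoC p m n) (k : ℕ) (g : DihedralGroup p) (z : ℤ) :
    f (single (.c k g) z) = -z * f (diffChain k k) := by
  rw [apply_single_eq_mul, diffChain, if_pos rfl, map_neg, neg_mul_neg,
    ← (mem_KcoC_iff.1 hf).2 g (.c k 1), actC, mul_one]

lemma apply_diffChain_of_ne (f : DualC p) {k l : ℕ} (h : l ≠ k) :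
    f (diffChain k l) = f (cellChain .a k l) - f (cellChain .b k l) := by
  rw [diffChain, if_neg h, map_sub]

lemma cochain_ext (hf : f ∈ KcoC p m n) (hg : g ∈ KcoC p m n)
    (hA : ∀ k l, l < k → k ≤ m → k + l = n + 1 → f (cellChain .a k l) = g (cellChain .a k l))
    (hD : ∀ k l, l ≤ k → k ≤ m → k + l = n + 1 → f (diffChain k l) = g (diffChain k l)) :
    f = g := by
  have hcell (s k l) (hl : l < k) (hk : k ≤ m) (hkl : k + l = n + 1) :
      f (cellChain s k l) = g (cellChain s k l) := by
    have hA := hA k l hl hk hkl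
    have hD := hD k l hl.le hk hkl
    rw [apply_diffChain_of_ne f hl.ne, apply_diffChain_of_ne g hl.ne] at hD
    cases s <;> lia
  ext i
  by_cases hi : validC m i ∧ degC i = n
  · rcases exists_eq_cell_or_eq_c hi.1 with ⟨s, k, l, x, rfl⟩ | ⟨k, x, rfl⟩
    · obtain ⟨hl, hk, hkl⟩ := (validC_cell_and_degC_eq_iff s k l x).1 hi
      simp [apply_single_cell hf, apply_single_cell hg, hcell s k l hl hk hkl]
    · obtain ⟨hk, hkk⟩ := (validC_c_and_degC_eq_iff k x).1 hi
      simp [apply_single_c hf, apply_single_c hg, hD k k le_rfl hk hkk]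
  · exact ((mem_KcoC_iff.1 hf).1 i hi).trans ((mem_KcoC_iff.1 hg).1 i hi).symm

lemma disjoint_KcoC {n' : ℕ} (h : n ≠ n') : Disjoint (KcoC p m n) (KcoC p m n') := by
  refine Submodule.disjoint_def.2 fun f hf hf' => ?_
  ext i
  by_cases hi : degC i = n
  · exact (mem_KcoC_iff.1 hf').1 i fun hi' => h (hi.symm.trans hi'.2)
  · exact (mem_KcoC_iff.1 hf).1 i fun hi' => hi hi'.2

/-- The value on a cell of the equivariant cochain with coordinates `A(k,l)` and `D(k,l)`. -/
def coordValue (A D : ℕ → ℕ → ℤ) : CIdx p → ℤ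
  | .a0 k _ => A k 0
  | .b0 k _ => A k 0 - D k 0
  | .a k l _ => A k l
  | .b k l _ => A k l - D k l
  | .c k _ => -D k k

open Classical in
/-- The equivariant cochain of degree `n` with coordinates `A(k,l)` and `D(k,l)`, of which only
those with `k + l = n + 1` matter. -/
def cochainOfCoords (p m n : ℕ) (A D : ℕ → ℕ → ℤ) : DualC p :=
  Finsupp.lift ℤ ℤ (CIdx p) fun i => if validC m i ∧ degC i = n then coordValue A D i else 0

variable (A D : ℕ → ℕ → ℤ)

open Classical in
lemma cochainOfCoords_single (i : CIdx p) :
    cochainOfCoords p m n A D (single i 1) =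
      if validC m i ∧ degC i = n then coordValue A D i else 0 := by
  simp [cochainOfCoords]

lemma cochainOfCoords_mem_KcoC : cochainOfCoords p m n A D ∈ KcoC p m n := by
  refine mem_KcoC_iff.2 ⟨fun i hi => by rw [cochainOfCoords_single, if_neg hi], fun g i => ?_⟩
  rw [cochainOfCoords_single, cochainOfCoords_single]
  cases i <;> rfl

lemma cochainOfCoords_cellChain_a {k l : ℕ} (hl : l < k) (hk : k ≤ m) (hkl : k + l = n + 1) :
    cochainOfCoords p m n A D (cellChain .a k l) = A k l := by
  rw [cellChain, cochainOfCoords_single, if_pos ((validC_cell_and_degC_eq_iff ..).2 ⟨hl, hk, hkl⟩)]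
  cases l <;> rfl

lemma cochainOfCoords_cellChain_b {k l : ℕ} (hl : l < k) (hk : k ≤ m) (hkl : k + l = n + 1) :
    cochainOfCoords p m n A D (cellChain .b k l) = A k l - D k l := by
  rw [cellChain, cochainOfCoords_single, if_pos ((validC_cell_and_degC_eq_iff ..).2 ⟨hl, hk, hkl⟩)]
  cases l <;> rfl

lemma cochainOfCoords_diffChain {k l : ℕ} (hl : l ≤ k) (hk : k ≤ m) (hkl : k + l = n + 1) :
    cochainOfCoords p m n A D (diffChain k l) = D k l := by
  rcases hl.eq_or_lt with rfl | hl
  · rw [diffChain, if_pos rfl, map_neg, cochainOfCoords_single,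
      if_pos ((validC_c_and_degC_eq_iff ..).2 ⟨hk, hkl⟩), coordValue, neg_neg]
  · rw [apply_diffChain_of_ne _ hl.ne, cochainOfCoords_cellChain_a A D hl hk hkl,
      cochainOfCoords_cellChain_b A D hl hk hkl, sub_sub_cancel]

end Cochains

section Coboundary

open Classical in
lemma cobdC_apply_single (f : DualC p) (i : CIdx p) :
    cobdC p m j n f (single i 1) =
      if validC m i ∧ degC i = n + 1 then f (bndC p j i) else 0 := by
  simp only [cobdC, LinearMap.lcomp_apply, LinearMap.comp_apply, projC, Finsupp.lift_apply,
    Finsupp.sum_single_index, zero_smul, one_smul]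
  split_ifs <;> simp [DC]

lemma cobdC_mem_KcoC (hf : f ∈ KcoC p m n) : cobdC p m j n f ∈ KcoC p m (n + 1) := by
  refine mem_KcoC_iff.2 ⟨fun i hi => by rw [cobdC_apply_single, if_neg hi], fun g i => ?_⟩
  rw [cobdC_apply_single, cobdC_apply_single, bndC_actC, apply_rhoC hf]
  cases i <;> rfl

lemma apply_horizBnd (hf : f ∈ KcoC p m n) (hodd : Odd p) {k : ℕ} (hk : 1 ≤ k) (l : ℕ)
    (g : DihedralGroup p) :
    f (horizBnd j k l g) = horizCoeff p k l * f (diffChain (k - 1) l) := by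
  by_cases h : l + 1 = k
  · subst h
    obtain ⟨s, rfl⟩ := hodd
    rcases Nat.even_or_odd (l + 1) with he | ho
    · simp [horizBnd, horizCoeff, apply_single_c hf, he.neg_one_pow, Nat.not_odd_iff_even.2 he]
    · simp [horizBnd, horizCoeff, apply_single_c hf, ho.neg_one_pow, ho, add_mul, two_mul (s : ℤ),
        add_comm, add_assoc]
  · have hl : l ≠ k - 1 := by omega
    simp [horizBnd, horizCoeff, h, apply_single_cell hf, apply_diffChain_of_ne f hl]

lemma apply_vertBnd (hf : f ∈ KcoC p m n) (s : Side) {k l : ℕ} (hl : l < k)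
    (g : DihedralGroup p) :
    f (vertBnd s k l g) = vertCoeff k l * f (cellChain s k (l - 1)) := by
  obtain ⟨d, rfl⟩ := Nat.exists_eq_add_of_lt hl
  rcases l with _ | _ | l
  · simp [vertBnd, vertCoeff]
  · simp [vertBnd, vertCoeff, apply_single_cell hf, pow_add]
  · have hd : l + 2 + d + 1 - (l + 2) = d + 1 := by omega
    rcases Nat.even_or_odd l with he | ho
    · simp [vertBnd, vertCoeff, apply_single_cell hf, he, hd, pow_add]
    · simp [vertBnd, vertCoeff, apply_single_cell hf, ho, hd, pow_add, Nat.even_add_one, ← two_mul,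
        mul_assoc]

lemma cobdC_cellChain (hf : f ∈ KcoC p m n) (hodd : Odd p) (s : Side) {k l : ℕ} (hl : l < k)
    (hk : k ≤ m) (hkl : k + l = n + 2) :
    cobdC p m j n f (cellChain s k l) =
      horizCoeff p k l * f (diffChain (k - 1) l) + vertCoeff k l * f (cellChain s k (l - 1)) := by
  rw [cellChain, cobdC_apply_single, if_pos ((validC_cell_and_degC_eq_iff s k l 1).2 ⟨hl, hk, hkl⟩),
    bndC_cell s (by omega) hl, map_add, apply_horizBnd hf hodd (by omega), apply_vertBnd hf s hl]

lemma apply_bndC_c (hf : f ∈ KcoC p m n) {k : ℕ} (hk : 1 ≤ k) (g : DihedralGroup p) :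
    f (bndC p j (.c k g)) = -vertCoeff k k * f (diffChain k (k - 1)) := by
  obtain _ | _ | k := k
  · contradiction
  · simp [bndC_c, vertCoeff, apply_single_cell hf, apply_diffChain_of_ne]
  rcases Nat.even_or_odd k with he | ho
  · simp [bndC_c, vertCoeff, apply_single_cell hf, apply_diffChain_of_ne, he, pow_succ]
  · simp [bndC_c, vertCoeff, apply_single_cell hf, apply_diffChain_of_ne, ho, pow_succ,
      Nat.even_add_one, two_mul, sub_eq_add_neg, add_comm, add_left_comm, add_assoc]

lemma cobdC_diffChain (hf : f ∈ KcoC p m n) (hodd : Odd p) {k l : ℕ} (hl : l ≤ k) (hk : k ≤ m)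
    (hkl : k + l = n + 2) :
    cobdC p m j n f (diffChain k l) = vertCoeff k l * f (diffChain k (l - 1)) := by
  rcases hl.eq_or_lt with rfl | hl
  · rw [diffChain, if_pos rfl, map_neg, cobdC_apply_single,
      if_pos ((validC_c_and_degC_eq_iff l 1).2 ⟨hk, hkl⟩), apply_bndC_c hf (by omega)]
    ring
  · rw [apply_diffChain_of_ne _ hl.ne, apply_diffChain_of_ne f (show l - 1 ≠ k by omega),
      cobdC_cellChain hf hodd .a hl hk hkl, cobdC_cellChain hf hodd .b hl hk hkl]
    ring

lemma apply_diffChain_of_mem_ZcoC (hf : f ∈ ZcoC p m j n) (hodd : Odd p) {k l : ℕ} (hl : l < k)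
    (hk : k ≤ m) (hkl : k + l = n + 1) : vertCoeff k (l + 1) * f (diffChain k l) = 0 := by
  have h := cobdC_diffChain (j := j) hf.1 hodd hl hk (by omega)
  rwa [LinearMap.mem_ker.1 hf.2, LinearMap.zero_apply, eq_comm] at h

lemma apply_diffChain_eq_of_mem_ZcoC (hf : f ∈ ZcoC p m j n) (hodd : Odd p) {k l : ℕ}
    (hl : l ≤ k) (hk : k < m) (hkl : k + l = n + 1) :
    f (diffChain k l) = vertCoeff k l * f (cellChain .a (k + 1) (l - 1)) := by
  have h := cobdC_cellChain (j := j) hf.1 hodd .a (Nat.lt_succ_of_le hl) hk (by omega)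
  rw [LinearMap.mem_ker.1 hf.2, LinearMap.zero_apply, Nat.succ_eq_add_one, Nat.add_sub_cancel,
    vertCoeff_succ_left] at h
  rcases horizCoeff_eq_one_or_vertCoeff_eq_zero p (k + 1) k l with hw | he
  · rw [hw] at h
    linarith
  · simpa [he, horizCoeff_ne_zero hodd.pos.ne'] using h

lemma cobdC_cochainOfCoords (hodd : Odd p) (A D : ℕ → ℕ → ℤ) :
    cobdC p m j n (cochainOfCoords p m n A D) = cochainOfCoords p m (n + 1)
      (fun k l => horizCoeff p k l * D (k - 1) l + vertCoeff k l * A k (l - 1))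
      (fun k l => vertCoeff k l * D k (l - 1)) := by
  have hg : cochainOfCoords p m n A D ∈ KcoC p m n := cochainOfCoords_mem_KcoC A D
  refine cochain_ext (cobdC_mem_KcoC hg) (cochainOfCoords_mem_KcoC _ _)
    (fun k l hl hk hkl => ?_) (fun k l hl hk hkl => ?_)
  · rw [cobdC_cellChain hg hodd .a hl hk hkl, cochainOfCoords_cellChain_a _ _ hl hk hkl,
      cochainOfCoords_diffChain A D (by omega) (by omega) (by omega)]
    rcases l with _ | l
    · simp [vertCoeff_of_even]
    · rw [cochainOfCoords_cellChain_a A D (by omega) hk (by omega)]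
  · rw [cobdC_diffChain hg hodd hl hk hkl, cochainOfCoords_diffChain _ _ hl hk hkl]
    rcases l with _ | l
    · simp [vertCoeff_of_even]
    · rw [cochainOfCoords_diffChain A D (by omega) hk (by omega)]

lemma cochainOfCoords_mem_ZcoC (hodd : Odd p) {A D : ℕ → ℕ → ℤ}
    (hA : ∀ k l, l < k → k ≤ m → k + l = n + 2 →
      horizCoeff p k l * D (k - 1) l + vertCoeff k l * A k (l - 1) = 0)
    (hD : ∀ k l, l ≤ k → k ≤ m → k + l = n + 2 → vertCoeff k l * D k (l - 1) = 0) :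
    cochainOfCoords p m n A D ∈ ZcoC p m j n := by
  refine ⟨cochainOfCoords_mem_KcoC A D, LinearMap.mem_ker.2 ?_⟩
  rw [cobdC_cochainOfCoords hodd]
  refine cochain_ext (cochainOfCoords_mem_KcoC _ _) (Submodule.zero_mem _)
    (fun k l hl hk hkl => ?_) (fun k l hl hk hkl => ?_)
  · rw [cochainOfCoords_cellChain_a _ _ hl hk hkl, hA k l hl hk hkl, LinearMap.zero_apply]
  · rw [cochainOfCoords_diffChain _ _ hl hk hkl, hD k l hl hk hkl, LinearMap.zero_apply]

end Coboundary

section Cohomology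

/-- The degree-`n` coboundaries, as a submodule of the cocycles: the denominator of `HcoC`. -/
def coboundaries (p m j n : ℕ) : Submodule ℤ (ZcoC p m j n) :=
  ((KcoC p m (n - 1)).map (cobdC p m j (n - 1))).comap (ZcoC p m j n).subtype

lemma coboundaries_zero : coboundaries p m j 0 = ⊥ := by
  rw [eq_bot_iff]
  rintro ⟨_, hf⟩ ⟨g, hg, rfl⟩
  exact Subtype.ext <|
    Submodule.disjoint_def.1 (disjoint_KcoC zero_ne_one) _ hf.1 (cobdC_mem_KcoC hg)

lemma exists_cobdC_eq (hf : f ∈ ZcoC p m j (n + 1)) (hodd : Odd p)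
    (hA : ∀ k l, l < k → k ≤ m → k + l = n + 2 → horizCoeff p k l ∣ f (cellChain .a k l))
    (hD : ∀ l ≤ m, m + l = n + 2 → vertCoeff m l ∣ f (diffChain m l)) :
    ∃ g ∈ KcoC p m n, cobdC p m j n g = f := by
  refine ⟨cochainOfCoords p m n 0 fun k l =>
    if k = m then f (diffChain m (l + 1)) / vertCoeff m (l + 1)
    else f (cellChain .a (k + 1) l) / horizCoeff p (k + 1) l, cochainOfCoords_mem_KcoC _ _, ?_⟩
  rw [cobdC_cochainOfCoords hodd]
  refine cochain_ext (cochainOfCoords_mem_KcoC _ _) hf.1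
    (fun k l hl hk hkl => ?_) (fun k l hl hk hkl => ?_)
  · rw [cochainOfCoords_cellChain_a _ _ hl hk hkl, if_neg (by omega),
      Nat.sub_add_cancel (by omega), Int.mul_ediv_cancel' (hA k l hl hk hkl)]
    simp
  rw [cochainOfCoords_diffChain _ _ hl hk hkl]
  rcases hk.eq_or_lt with rfl | hk
  · have hdvd := hD l hl hkl
    rcases l with _ | l
    · simpa [vertCoeff_of_even, eq_comm] using hdvd
    · rw [if_pos rfl, Nat.add_sub_cancel, Int.mul_ediv_cancel' hdvd]
  · rw [if_neg hk.ne, apply_diffChain_eq_of_mem_ZcoC hf hodd hl hk hkl]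
    rcases l with _ | l
    · simp [vertCoeff_of_even]
    · rw [horizCoeff_of_lt (by omega), Int.ediv_one]

lemma mem_coboundaries_succ_iff (hodd : Odd p) (f : ZcoC p m j (n + 1)) :
    f ∈ coboundaries p m j (n + 1) ↔
      (∀ k l, l < k → k ≤ m → k + l = n + 2 → horizCoeff p k l ∣ f.1 (cellChain .a k l)) ∧
        ∀ l ≤ m, m + l = n + 2 → vertCoeff m l ∣ f.1 (diffChain m l) := by
  refine ⟨?_, fun h => exists_cobdC_eq f.2 hodd h.1 h.2⟩
  rintro ⟨g, hg : g ∈ KcoC p m n, hgf : cobdC p m j n g = f.1⟩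
  refine ⟨fun k l hl hk hkl => ?_, fun l hl hml => ?_⟩
  · rw [← hgf, cobdC_cellChain hg hodd .a hl hk hkl]
    rcases horizCoeff_eq_one_or_vertCoeff_eq_zero p k k l with hw | he
    · simp [hw]
    · simp [he]
  · rw [← hgf, cobdC_diffChain hg hodd hl le_rfl hml]
    exact dvd_mul_right _ _

/-- The order of the cyclic summand `A_n` of the cohomology, where order `0` means `ℤ`. -/
def freeOrder (n : ℕ) : ℕ :=
  if n = 0 then 0 else 1

/-- The order of the cyclic summand `P'_n` of the cohomology. -/
def pTorsionOrder (p m n : ℕ) : ℕ :=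
  if 0 < n ∧ n < 2 * m - 1 ∧ n % 4 = 0 then p else 1

/-- The order of the cyclic summand `Q'_n` of the cohomology, which comes from the column of index
`m`; order `0` means `ℤ`. -/
def topOrder (m n : ℕ) : ℕ :=
  if n = 2 * m - 1 ∧ Even m then 0
  else if m + 2 ≤ n ∧ n ≤ 2 * m - 1 ∧ n % 2 = m % 2 then 2
  else 1

lemma forall_horizCoeff_dvd_iff (hn : 0 < n) (x : ℕ → ℕ → ℤ) :
    (∀ k l, l < k → k ≤ m → k + l = n + 1 → horizCoeff p k l ∣ x k l) ↔
      (pTorsionOrder p m n : ℤ) ∣ x (n / 2 + 1) (n / 2) := by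
  by_cases h : n < 2 * m - 1 ∧ n % 4 = 0
  · have hodd : Odd (n / 2 + 1) := by grind
    rw [pTorsionOrder, if_pos ⟨hn, h⟩]
    refine ⟨fun hw => ?_, fun hp k l _ _ hkl => ?_⟩
    · simpa [horizCoeff, hodd] using hw (n / 2 + 1) (n / 2) (by omega) (by omega) (by omega)
    · unfold horizCoeff
      split_ifs with hkl'
      · rwa [show k = n / 2 + 1 by omega, show l = n / 2 by omega]
      · exact one_dvd _
  · rw [pTorsionOrder, if_neg (by tauto), Nat.cast_one]
    refine iff_of_true (fun k l _ hk hkl => ?_) (one_dvd _)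
    rw [horizCoeff, if_neg (by grind)]
    exact one_dvd _

lemma vertCoeff_dvd_iff {l : ℕ} (hl : l ≤ m) (hml : m + l = n + 1) {y : ℤ}
    (hy : l < m → vertCoeff m (l + 1) * y = 0) :
    vertCoeff m l ∣ y ↔ (topOrder m n : ℤ) ∣ y := by
  rcases Nat.even_or_odd l with he | ho
  · rcases hl.eq_or_lt with rfl | hl
    · rw [vertCoeff_of_even l he, topOrder, if_pos ⟨by omega, he⟩, Nat.cast_zero]
    · have hy : y = 0 := (mul_eq_zero.1 (hy hl)).resolve_left (vertCoeff_ne_zero m he.add_one)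
      simp [hy]
  have htop : ¬(n = 2 * m - 1 ∧ Even m) := by grind
  by_cases hl1 : l = 1
  · subst hl1
    rw [topOrder, if_neg htop, if_neg (by omega), Nat.cast_one]
    exact iff_of_true (isUnit_vertCoeff_one m).dvd (one_dvd y)
  · rw [topOrder, if_neg htop, if_pos (by grind)]
    exact (associated_vertCoeff_two m ho hl1).dvd_iff_dvd_left

lemma forall_vertCoeff_dvd_iff (hm : 1 ≤ m) {y : ℕ → ℤ}
    (hy : ∀ l < m, m + l = n + 1 → vertCoeff m (l + 1) * y l = 0) :
    (∀ l ≤ m, m + l = n + 1 → vertCoeff m l ∣ y l) ↔ (topOrder m n : ℤ) ∣ y (n + 1 - m) := by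
  by_cases h : m ≤ n + 1 ∧ n + 1 ≤ 2 * m
  · have hl : n + 1 - m ≤ m := by omega
    have hml : m + (n + 1 - m) = n + 1 := by omega
    rw [← vertCoeff_dvd_iff hl hml fun hl => hy _ hl hml]
    refine ⟨fun hv => hv _ hl hml, fun hv l _ hml' => ?_⟩
    rwa [show l = n + 1 - m by omega]
  · rw [topOrder, if_neg (by omega), if_neg (by omega), Nat.cast_one]
    exact iff_of_true (fun l hl hml => by omega) (one_dvd _)

/-- The value modulo `N` of a cocycle at the chain `x`. -/
def evalMod (N : ℕ) (x : ChC p) : ZcoC p m j n →ₗ[ℤ] ZMod N :=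
  (Int.castAddHom (ZMod N)).toIntLinearMap ∘ₗ LinearMap.applyₗ x ∘ₗ (ZcoC p m j n).subtype

lemma evalMod_apply (N : ℕ) (x : ChC p) (f : ZcoC p m j n) : evalMod N x f = (f.1 x : ZMod N) :=
  rfl

lemma evalMod_eq_of_ne_one {N : ℕ} {x : ChC p} {f : ZcoC p m j n} {z : ℤ}
    (h : N ≠ 1 → f.1 x = z) : evalMod N x f = z := by
  by_cases hN : N = 1
  · subst hN
    exact Subsingleton.elim _ _
  · rw [evalMod_apply, h hN]

/-- The map to `A_n ⊕ P'_n ⊕ Q'_n` that induces the isomorphism on cohomology. -/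
def cohomologyInvariants (p m j n : ℕ) : ZcoC p m j n →ₗ[ℤ]
    ZMod (freeOrder n) × ZMod (pTorsionOrder p m n) × ZMod (topOrder m n) :=
  (evalMod _ (cellChain .a 1 0)).prod
    ((evalMod _ (cellChain .a (n / 2 + 1) (n / 2))).prod (evalMod _ (diffChain m (n + 1 - m))))

lemma mem_ker_cohomologyInvariants_iff (f : ZcoC p m j n) :
    f ∈ LinearMap.ker (cohomologyInvariants p m j n) ↔
      (freeOrder n : ℤ) ∣ f.1 (cellChain .a 1 0) ∧
      (pTorsionOrder p m n : ℤ) ∣ f.1 (cellChain .a (n / 2 + 1) (n / 2)) ∧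
      (topOrder m n : ℤ) ∣ f.1 (diffChain m (n + 1 - m)) := by
  simp only [cohomologyInvariants, LinearMap.ker_prod, Submodule.mem_inf, LinearMap.mem_ker,
    evalMod_apply, ZMod.intCast_zmod_eq_zero_iff_dvd]

lemma eq_zero_iff_of_degree_zero (hodd : Odd p) (hm : 1 ≤ m) (f : ZcoC p m j 0) :
    f = 0 ↔ f.1 (cellChain .a 1 0) = 0 := by
  refine ⟨fun h => by simp [h], fun h => Subtype.ext ?_⟩
  refine cochain_ext f.2.1 (Submodule.zero_mem _) (fun k l hl hk hkl => ?_)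
    (fun k l hl hk hkl => ?_)
  · obtain ⟨rfl, rfl⟩ : k = 1 ∧ l = 0 := by omega
    exact h
  · obtain ⟨rfl, rfl⟩ : k = 1 ∧ l = 0 := by omega
    exact (mul_eq_zero.1 (apply_diffChain_of_mem_ZcoC f.2 hodd one_pos hm rfl)).resolve_left
      (vertCoeff_ne_zero 1 odd_one)

lemma ker_cohomologyInvariants (hodd : Odd p) (hm : 1 ≤ m) (n : ℕ) :
    LinearMap.ker (cohomologyInvariants p m j n) = coboundaries p m j n := by
  ext f
  rw [mem_ker_cohomologyInvariants_iff]
  rcases n with _ | n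
  · rw [coboundaries_zero, Submodule.mem_bot, eq_zero_iff_of_degree_zero hodd hm, freeOrder,
      if_pos rfl, pTorsionOrder, if_neg (by omega), topOrder, if_neg (by omega), if_neg (by omega)]
    simp
  · rw [mem_coboundaries_succ_iff hodd,
      forall_horizCoeff_dvd_iff n.succ_pos fun k l => f.1 (cellChain .a k l),
      forall_vertCoeff_dvd_iff hm fun l hl hml =>
        apply_diffChain_of_mem_ZcoC f.2 hodd hl le_rfl hml,
      freeOrder, if_neg n.succ_ne_zero, Nat.cast_one, and_iff_right (one_dvd _)]

lemma cohomologyInvariants_surjective (hodd : Odd p) (hm : 1 ≤ m) (n : ℕ) :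
    Function.Surjective (cohomologyInvariants p m j n) := by
  rintro ⟨x, y, z⟩
  obtain ⟨x, rfl⟩ := ZMod.intCast_surjective x
  obtain ⟨y, rfl⟩ := ZMod.intCast_surjective y
  obtain ⟨z, rfl⟩ := ZMod.intCast_surjective z
  -- The coordinates supporting this cochain do not occur in the formulas for the coboundary.
  let A (k l : ℕ) : ℤ := if k = l + 1 then if l = 0 then x else y else 0
  let D (k l : ℕ) : ℤ := if k = m ∧ (l = k ∨ Odd l) then z else 0
  have hf : cochainOfCoords p m n A D ∈ ZcoC p m j n := by
    refine cochainOfCoords_mem_ZcoC hodd (fun k l hl hk hkl => ?_) (fun k l hl _ _ => ?_)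
    · rcases l with _ | l
      · rw [vertCoeff_of_even k Even.zero, zero_mul, add_zero]
        simp [D, show k - 1 ≠ m by omega]
      · simp [A, D, show k - 1 ≠ m by omega, show k ≠ l + 1 by omega]
    · rcases Nat.even_or_odd l with he | ho
      · rw [vertCoeff_of_even k he, zero_mul]
      · have : ¬(l - 1 = k ∨ Odd (l - 1)) := by grind
        simp [D, this]
  refine ⟨⟨_, hf⟩, Prod.ext ?_ (Prod.ext ?_ ?_)⟩ <;> refine evalMod_eq_of_ne_one fun h => ?_
  · have hn : n = 0 := by simpa [freeOrder] using h
    rw [cochainOfCoords_cellChain_a A D one_pos hm (by omega)]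
    simp [A]
  · have hn : 0 < n ∧ n < 2 * m - 1 ∧ n % 4 = 0 := by
      by_contra hn
      exact h (if_neg hn)
    rw [cochainOfCoords_cellChain_a A D (by omega) (by omega) (by omega)]
    simp [A, show n / 2 ≠ 0 by omega]
  · have hn : n = 2 * m - 1 ∨ m + 2 ≤ n ∧ n ≤ 2 * m - 1 ∧ n % 2 = m % 2 := by
      by_contra! hn
      exact h (by rw [topOrder, if_neg (by tauto), if_neg (by tauto)])
    rw [cochainOfCoords_diffChain A D (by omega) le_rfl (by omega)]
    exact if_pos ⟨rfl, by grind⟩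

end Cohomology

end DihedralCell

end

open DihedralCell in
theorem dihedral_cellular_cohomology_general
    (p : ℕ) (hodd : Odd p) (j m : ℕ) (hm : 1 ≤ m) (n : ℕ) :
    Nonempty (HcoC p m j n ≃ₗ[ℤ]
      (ZMod (if n = 0 then 0 else 1) ×
       ZMod (if 0 < n ∧ n < 2 * m - 1 ∧ n % 4 = 0 then p else 1) ×
       ZMod (if n = 2 * m - 1 ∧ Even m then 0
             else if m + 2 ≤ n ∧ n ≤ 2 * m - 1 ∧ n % 2 = m % 2 then 2
             else 1))) :=
  ⟨(Submodule.quotEquivOfEq _ _ (ker_cohomologyInvariants hodd hm n).symm).trans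
    ((cohomologyInvariants p m j n).quotKerEquivOfSurjective
      (cohomologyInvariants_surjective hodd hm n))⟩

open DihedralCell in
/-- The cohomology of the cochain complex `Hom_{ℤ[D_{2p}]}(C(j), ℤ)`
satisfies `H^n ≅ A_n ⊕ P'_n ⊕ Q'_n`, where `A_n = ℤ` iff `n = 0`; `P'_n = ℤ/p` iff
`0 < n < 2m-1` and `n ≡ 0 (mod 4)`; `Q'_n = ℤ` iff `n = 2m-1` with `m` even, and
`Q'_n = ℤ/2` iff `m+2 ≤ n ≤ 2m-1` with `n ≡ m (mod 2)`. (`ZMod 0 = ℤ`, `ZMod 1 = 0`.) -/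
theorem dihedral_cellular_cohomology
    (p : ℕ) (hp : p.Prime) (hodd : Odd p)
    (j : ℕ) (hj1 : 1 ≤ j) (hj2 : j ≤ p - 1)
    (m : ℕ) (hm : 1 ≤ m) :
    ∀ n : ℕ, Nonempty (HcoC p m j n ≃ₗ[ℤ]
      (ZMod (if n = 0 then 0 else 1) ×
       ZMod (if 0 < n ∧ n < 2 * m - 1 ∧ n % 4 = 0 then p else 1) ×
       ZMod (if n = 2 * m - 1 ∧ Even m then 0
             else if m + 2 ≤ n ∧ n ≤ 2 * m - 1 ∧ n % 2 = m % 2 then 2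
             else 1))) := by
  exact fun n => dihedral_cellular_cohomology_general p hodd j m hm n
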